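/- Fix α ∈ [0,1) and x ∈ Ω, and assume 𝒢({x}, α) is nonempty. Then the supremum over all valid level-(1−α) lower confidence bounds B of the value B(x) equals inf{E[F] : F ∈ 𝒻({x}, α)}; in particular, every valid level-(1−α) lower confidence bound B satisfies B(x) ≤ inf{E[F] : F ∈ 𝒻({x}, α)}. -/

import Mathlib

noncomputable section

/-- Distributions on the finite support `S`, viewed as points of the probability
simplex inside `EuclideanSpace ℝ S` (Euclidean metric). -/
def distSet (S : Finset ℝ) : Set (EuclideanSpace ℝ ↥S) :=
  {F | (∀ s, 0 ≤ F s) ∧ ∑ s, F s = 1}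

/-- Mean of a distribution on `S`. -/
def distMean (S : Finset ℝ) (F : EuclideanSpace ℝ ↥S) : ℝ :=
  ∑ s : ↥S, F s * (s : ℝ)

open Classical in
/-- `P_F[A]`: probability of a set `A` of `n`-tuples under `n` i.i.d. draws from `F`. -/
def probOf (S : Finset ℝ) (n : ℕ) (F : EuclideanSpace ℝ ↥S)
    (A : Set (Fin n → ↥S)) : ℝ :=
  ∑ y : Fin n → ↥S, if y ∈ A then ∏ i, F (y i) else 0

/-- The interior likely set `𝒢(A, α)`. -/
def intLikely (S : Finset ℝ) (n : ℕ) (A : Set (Fin n → ↥S)) (α : ℝ) :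
    Set (EuclideanSpace ℝ ↥S) :=
  {F | F ∈ distSet S ∧ α < probOf S n F A}

/-- The likely set `𝒻(A, α)`: the closure of `𝒢(A, α)`. -/
def likely (S : Finset ℝ) (n : ℕ) (A : Set (Fin n → ↥S)) (α : ℝ) :
    Set (EuclideanSpace ℝ ↥S) :=
  closure (intLikely S n A α)

/-- `Ω`: the set of nondecreasing (`sorted`) `n`-tuples over `S`. -/
def sortedTuples (S : Finset ℝ) (n : ℕ) : Set (Fin n → ↥S) :=
  {x | Monotone x}

/-- The sorted version of a tuple. -/
def sortTup (S : Finset ℝ) (n : ℕ) (y : Fin n → ↥S) : Fin n → ↥S :=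
  y ∘ Tuple.sort y

/-- Probability of a set `A ⊆ Ω` of sorted tuples, identifying tuples with
their sorted versions. -/
def probSorted (S : Finset ℝ) (n : ℕ) (F : EuclideanSpace ℝ ↥S)
    (A : Set (Fin n → ↥S)) : ℝ :=
  probOf S n F {y | sortTup S n y ∈ A}

/-- Interior likely set for a set of sorted tuples. -/
def intLikelySorted (S : Finset ℝ) (n : ℕ) (A : Set (Fin n → ↥S)) (α : ℝ) :
    Set (EuclideanSpace ℝ ↥S) :=
  {F | F ∈ distSet S ∧ α < probSorted S n F A}

/-- Likely set for a set of sorted tuples. -/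
def likelySorted (S : Finset ℝ) (n : ℕ) (A : Set (Fin n → ↥S)) (α : ℝ) :
    Set (EuclideanSpace ℝ ↥S) :=
  closure (intLikelySorted S n A α)

/-- Upper set `Ω(x, R)` of `x` under a relation `R` on `Ω`. -/
def upperSet (S : Finset ℝ) (n : ℕ) (r : (Fin n → ↥S) → (Fin n → ↥S) → Prop)
    (x : Fin n → ↥S) : Set (Fin n → ↥S) :=
  {y ∈ sortedTuples S n | r x y}

/-- Pessimal bound `B_R^*(x) = inf {E[F] : F ∈ 𝒻(Ω(x,R), α)}`. -/
def pessimal (S : Finset ℝ) (n : ℕ) (r : (Fin n → ↥S) → (Fin n → ↥S) → Prop)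
    (α : ℝ) (x : Fin n → ↥S) : ℝ :=
  sInf (distMean S '' likelySorted S n (upperSet S n r x) α)

/-- `B` is a valid level-`(1-α)` lower confidence bound for the mean. -/
def validBound (S : Finset ℝ) (n : ℕ) (α : ℝ) (B : (Fin n → ↥S) → ℝ) : Prop :=
  ∀ F ∈ distSet S, 1 - α ≤ probOf S n F {y | B (sortTup S n y) ≤ distMean S F}

/-!
A bound is valid iff for no `F` it exceeds the mean of `F` with probability more than `α`. If a
valid bound is at least `b` on a set `A` of samples, then it exceeds every mean below `b` on all of
`A`, so each `F` with `α < P_F[A]` has mean at least `b`. Conversely, the bound that reports such a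
`b` on `A` and `S_min` elsewhere can err only on `A`, and only when the mean of `F` is below `b`, in
which case `P_F[A] ≤ α`. Passing to the closure of `𝒢(A, α)` does not change the infimum, because
the mean is continuous.
-/

theorem isGLB_image_csInf_image_closure {X Y : Type*} [TopologicalSpace X]
    [ConditionallyCompleteLattice Y] [TopologicalSpace Y] [ClosedIciTopology Y]
    {f : X → Y} (hf : Continuous f) {s : Set X} (hne : s.Nonempty) (hbdd : BddBelow (f '' s)) :
    IsGLB (f '' s) (sInf (f '' closure s)) := by
  have hsub : f '' closure s ⊆ closure (f '' s) := image_closure_subset_closure_image hf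
  have hbdd' : BddBelow (f '' closure s) := hbdd.closure.mono hsub
  exact (isGLB_iff_of_subset_of_subset_closure (Set.image_mono subset_closure) hsub).2
    (isGLB_csInf (hne.closure.image f) hbdd')

theorem continuous_distMean (S : Finset ℝ) : Continuous (distMean S) := by
  unfold distMean
  fun_prop

theorem min'_mem_lowerBounds_distMean {S : Finset ℝ} (hS : S.Nonempty) :
    S.min' hS ∈ lowerBounds (distMean S '' distSet S) := by
  rintro _ ⟨F, ⟨hF_nonneg, hF_sum⟩, rfl⟩
  calc S.min' hS = ∑ s, F s * S.min' hS := by rw [← Finset.sum_mul, hF_sum, one_mul]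
    _ ≤ distMean S F := Finset.sum_le_sum fun s _ =>
      mul_le_mul_of_nonneg_left (S.min'_le s s.2) (hF_nonneg s)

section

variable {S : Finset ℝ} {n : ℕ} {F : EuclideanSpace ℝ ↥S} {α : ℝ} {A A' : Set (Fin n → ↥S)}

theorem probOf_mono (hF : ∀ s, 0 ≤ F s) (h : A ⊆ A') : probOf S n F A ≤ probOf S n F A' := by
  classical
  simp only [probOf, ← Finset.sum_filter]
  exact Finset.sum_le_sum_of_subset_of_nonneg
    (Finset.monotone_filter_right _ fun _ _ hy => h hy)
    fun y _ _ => Finset.prod_nonneg fun i _ => hF (y i)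

theorem probOf_add_probOf_compl (hF : ∑ s, F s = 1) :
    probOf S n F A + probOf S n F Aᶜ = 1 := by
  classical
  calc probOf S n F A + probOf S n F Aᶜ = ∑ y : Fin n → ↥S, ∏ i, F (y i) := by
        simp only [probOf, ← Finset.sum_filter, Set.mem_compl_iff]
        exact Finset.sum_filter_add_sum_filter_not _ _ _
    _ = 1 := by rw [← Fintype.sum_pow, hF, one_pow]

theorem probSorted_mono (hF : ∀ s, 0 ≤ F s) (h : A ⊆ A') :
    probSorted S n F A ≤ probSorted S n F A' :=
  probOf_mono hF fun _ hy => h hy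

theorem probSorted_empty : probSorted S n F ∅ = 0 := by
  simp [probSorted, probOf]

theorem validBound_iff_probSorted_distMean_lt_le {B : (Fin n → ↥S) → ℝ} :
    validBound S n α B ↔ ∀ F ∈ distSet S, probSorted S n F {y | distMean S F < B y} ≤ α := by
  refine forall₂_congr fun F hF => ?_
  have hcompl : {y | sortTup S n y ∈ {z | distMean S F < B z}} =
      {y | B (sortTup S n y) ≤ distMean S F}ᶜ := by
    simp only [Set.mem_ofPred_eq, ← not_le, Set.compl_ofPred]
  have htotal := probOf_add_probOf_compl (A := {y | B (sortTup S n y) ≤ distMean S F}) hF.2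
  rw [probSorted, hcompl]
  constructor <;> intro h <;> linarith

theorem validBound.mem_lowerBounds {B : (Fin n → ↥S) → ℝ} (hB : validBound S n α B) {b : ℝ}
    (hb : ∀ y ∈ A, b ≤ B y) : b ∈ lowerBounds (distMean S '' intLikelySorted S n A α) := by
  rintro _ ⟨F, ⟨hF, hFα⟩, rfl⟩
  by_contra! hlt
  have hsub : A ⊆ {y | distMean S F < B y} := fun y hy => hlt.trans_le (hb y hy)
  exact (hFα.trans_le (probSorted_mono hF.1 hsub)).not_ge
    (validBound_iff_probSorted_distMean_lt_le.1 hB F hF)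

theorem validBound_piecewise [DecidablePred (· ∈ A)] (hα : 0 ≤ α) {b c : ℝ}
    (hb : b ∈ lowerBounds (distMean S '' intLikelySorted S n A α))
    (hc : c ∈ lowerBounds (distMean S '' distSet S)) :
    validBound S n α (A.piecewise (fun _ => b) fun _ => c) := by
  refine validBound_iff_probSorted_distMean_lt_le.2 fun F hF => ?_
  set E : Set (Fin n → ↥S) := {y | distMean S F < A.piecewise (fun _ => b) (fun _ => c) y}
  have herr : ∀ y ∈ E, y ∈ A ∧ distMean S F < b := by
    intro y (hy : distMean S F < A.piecewise (fun _ => b) (fun _ => c) y)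
    by_cases hyA : y ∈ A
    · rw [Set.piecewise_eq_of_mem _ _ _ hyA] at hy
      exact ⟨hyA, hy⟩
    · rw [Set.piecewise_eq_of_notMem _ _ _ hyA] at hy
      exact absurd (hc ⟨F, hF, rfl⟩) hy.not_ge
  by_cases hbF : b ≤ distMean S F
  · have hempty : E = ∅ := Set.eq_empty_of_forall_notMem fun y hy => hbF.not_gt (herr y hy).2
    rwa [hempty, probSorted_empty]
  · have hFA : probSorted S n F A ≤ α := by
      by_contra! hFα
      exact hbF (hb ⟨F, ⟨hF, hFα⟩, rfl⟩)
    exact (probSorted_mono hF.1 fun y hy => (herr y hy).1).trans hFA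

theorem isGLB_distMean_intLikelySorted (hS : S.Nonempty)
    (hne : (intLikelySorted S n A α).Nonempty) :
    IsGLB (distMean S '' intLikelySorted S n A α)
      (sInf (distMean S '' likelySorted S n A α)) :=
  isGLB_image_csInf_image_closure (continuous_distMean S) hne
    ⟨S.min' hS, lowerBounds_mono_set (Set.image_mono fun _ hF => hF.1)
      (min'_mem_lowerBounds_distMean hS)⟩

end

/-- the supremum of `B x` over all valid level-`(1-α)` lower
confidence bounds `B` equals `inf {E[F] : F ∈ 𝒻({x}, α)}`; in particular every
valid bound `B` satisfies `B x ≤ inf {E[F] : F ∈ 𝒻({x}, α)}`. -/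
theorem stmt6 (S : Finset ℝ) (hS : S.Nonempty) (n : ℕ) (hn : 1 ≤ n)
    (α : ℝ) (hα0 : 0 ≤ α) (hα1 : α < 1)
    (x : Fin n → ↥S) (hx : x ∈ sortedTuples S n)
    (hne : (intLikelySorted S n {x} α).Nonempty) :
    (∀ B : (Fin n → ↥S) → ℝ, validBound S n α B →
        B x ≤ sInf (distMean S '' likelySorted S n {x} α)) ∧
    sSup {b : ℝ | ∃ B : (Fin n → ↥S) → ℝ, validBound S n α B ∧ b = B x} =
      sInf (distMean S '' likelySorted S n {x} α) := by
  classical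
  have hglb := isGLB_distMean_intLikelySorted hS hne
  have hupper : ∀ B : (Fin n → ↥S) → ℝ, validBound S n α B →
      B x ≤ sInf (distMean S '' likelySorted S n {x} α) := fun B hB =>
    hglb.2 (hB.mem_lowerBounds fun y hy => (congrArg B hy).ge)
  have hattained := validBound_piecewise hα0 hglb.1 (min'_mem_lowerBounds_distMean hS)
  refine ⟨hupper, IsGreatest.csSup_eq ⟨⟨_, hattained, ?_⟩, ?_⟩⟩
  · rw [Set.piecewise_eq_of_mem _ _ _ (Set.mem_singleton x)]
  · rintro _ ⟨B, hB, rfl⟩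
    exact hupper B hB

end
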